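/- Let n ≥ 3 be an odd integer and let j be an even integer. Let φ be the ring endomorphism of ℤ[z_0, …, z_{2n−1}] sending z_a to −1 for each even a with 2 ≤ a ≤ 2n−2 and fixing the other variables. Then there exist ε ∈ {1,−1} and a monomial M in ℤ[z_0, …, z_{2n−1}] such that φ(R_n(F_{j,n})) = ε·M·(1+z_0)^n. -/

import Mathlib

/-!
Every covering pair of `P_n` joins `Q_n` to `Q_{n+1}`. Fix the trace `J` of an ideal on `Q_n`. The
elements of `Q_{n+1}` are then forced in (`lowerSet`), forced out (outside `upperSet`), or free, and
the free ones may be chosen independently. So the sum over ideals with trace `J` is a monomial times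
the product of `1 + y` over the free elements (`sum_ideals`).

In the coordinates `vtx`, traces `J` are corner-sum matrices of `n × n` alternating sign matrices
(`exists_represents`), and the free elements correspond to the entries `1` (`mem_free`). Since `n`
is odd and `j` is even, the cell `(a,b)` carries the variable `y_{2(2a+b+e)}` for some integer `e`,
which specializes to `z_0` if `n ∣ 2a+b+e` and to `-1` otherwise. In the second case a free element
contributes the factor `0`. Hence only those alternating sign matrices survive whose entries `1` all
lie in cells with `n ∣ 2a+b+e`. There is one such cell in each row, and every row contains an
entry `1`, so there is at most one such matrix (`eq_permCorner`). As `n` is odd there is also one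
such cell in each column, so the permutation matrix of these cells is the single surviving term.
Its `n` free elements contribute `(1 + z_0)^n`, and the forced elements a signed monomial.
-/

open MvPolynomial
open scoped Classical

noncomputable section

/-- The set `Q_k`: triples `(r,s,t)` with `|r|+|s| ≤ k-2`, `r+s ≡ k (mod 2)`,
`t ≡ 2|s|-k+2 (mod 4)` and `2|s|-k+2 ≤ t ≤ k-2-2|r|`. -/
def pentagramQ (k : ℤ) : Set (ℤ × ℤ × ℤ) :=
  {p | |p.1| + |p.2.1| ≤ k - 2 ∧ (2 : ℤ) ∣ (p.1 + p.2.1 - k) ∧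
    (4 : ℤ) ∣ (p.2.2 - (2 * |p.2.1| - k + 2)) ∧
    2 * |p.2.1| - k + 2 ≤ p.2.2 ∧ p.2.2 ≤ k - 2 - 2 * |p.1|}

/-- The set `P_k = Q_k ∪ Q_{k+1}`. -/
def pentagramP (k : ℤ) : Set (ℤ × ℤ × ℤ) := pentagramQ k ∪ pentagramQ (k + 1)

/-- The covering relation: `(r',s',t')` covers `(r,s,t)` iff `t' = t + 1` and
`|r'-r| + |s'-s| = 1`. -/
def pentagramCovers (x y : ℤ × ℤ × ℤ) : Prop :=
  y.2.2 = x.2.2 + 1 ∧ |y.1 - x.1| + |y.2.1 - x.2.1| = 1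

/-- The partial order on `P_k`: the reflexive-transitive closure of the covering
relation within `P_k`. -/
def pentagramLe (k : ℤ) : (ℤ × ℤ × ℤ) → (ℤ × ℤ × ℤ) → Prop :=
  Relation.ReflTransGen
    (fun x y => x ∈ pentagramP k ∧ y ∈ pentagramP k ∧ pentagramCovers x y)

/-- An order ideal of `P_k`: a downward-closed subset of `P_k`. -/
def IsPentagramOrderIdeal (k : ℤ) (I : Set (ℤ × ℤ × ℤ)) : Prop :=
  I ⊆ pentagramP k ∧ ∀ x y, y ∈ I → pentagramLe k x y → x ∈ I

/-- `P_k` realized as a `Finset` (it is contained in the displayed finite box). -/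
def pentagramPFinset (k : ℤ) : Finset (ℤ × ℤ × ℤ) :=
  ((Finset.Icc (-(k-1)) (k-1)) ×ˢ (Finset.Icc (-(k-1)) (k-1)) ×ˢ
    (Finset.Icc (-(k-1)) (k-1))).filter (fun p => p ∈ pentagramP k)

/-- The F-polynomial `F_{j,k} = Σ_{order ideals I of P_k} Π_{(r,s,t) ∈ I} y_{3r+s+j}`,
as an element of `ℤ[y_i : i ∈ ℤ] = MvPolynomial ℤ ℤ`. -/
def pentagramF (j k : ℤ) : MvPolynomial ℤ ℤ :=
  ∑ I ∈ (pentagramPFinset k).powerset.filter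
      (fun I : Finset (ℤ × ℤ × ℤ) => IsPentagramOrderIdeal k (↑I : Set (ℤ × ℤ × ℤ))),
    ∏ p ∈ I, X (3 * p.1 + p.2.1 + j)

/-- The ring endomorphism of `ℤ[y_i : i ∈ ℤ]` sending `y_i ↦ -1` for `i ∈ S`
and fixing the other variables; `substNeg S F` is `F|_S`. -/
def substNeg (S : Set ℤ) : MvPolynomial ℤ ℤ →+* MvPolynomial ℤ ℤ :=
  (MvPolynomial.aeval
    (fun i : ℤ => if i ∈ S then (-1 : MvPolynomial ℤ ℤ) else X i)).toRingHom

/-- The arithmetic progression `[a,b]_d = {a, a+d, a+2d, …, b}` (as a subset of `ℤ`). -/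
def AP (a b d : ℤ) : Set ℤ := {x | a ≤ x ∧ x ≤ b ∧ d ∣ (x - a)}

/-- The ring homomorphism `R_n : ℤ[y_i : i ∈ ℤ] → ℤ[z_0, …, z_{2n-1}]` sending
`y_i` to `z_{i mod 2n}` (the variables `z_a` being indexed by `ZMod (2n)`). -/
def pentagramR (n : ℕ) : MvPolynomial ℤ ℤ →+* MvPolynomial (ZMod (2 * n)) ℤ :=
  (MvPolynomial.aeval
    (fun i : ℤ => (X (i : ZMod (2 * n)) : MvPolynomial (ZMod (2 * n)) ℤ))).toRingHom

/-- The ring endomorphism `φ` of `ℤ[z_0, …, z_{2n-1}]` sending `z_a ↦ -1` for each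
even `a` with `2 ≤ a ≤ 2n-2`, and fixing the other variables. -/
def pentagramPhi (n : ℕ) : MvPolynomial (ZMod (2 * n)) ℤ →+* MvPolynomial (ZMod (2 * n)) ℤ :=
  (MvPolynomial.aeval
    (fun a : ZMod (2 * n) =>
      if 2 ≤ a.val ∧ a.val ≤ 2 * n - 2 ∧ 2 ∣ a.val then (-1 : MvPolynomial (ZMod (2 * n)) ℤ)
      else X a)).toRingHom


/-! ### Sums over ideals of a two-layer relation -/

section Layers

variable {α : Type*} [DecidableEq α] (V W : Finset α) (R : α → α → Prop)

/-- Elements of `W` that every ideal with trace `J` on `V` must contain. -/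
def lowerSet (J : Finset α) : Finset α := W.filter (fun p => ∃ q ∈ J, R p q)

/-- Elements of `W` that an ideal with trace `J` on `V` may contain. -/
def upperSet (J : Finset α) : Finset α := W.filter (fun p => ∀ q ∈ V, R q p → q ∈ J)

/-- If `R` only relates elements of different layers, then an ideal with trace `J` on `V` is
obtained by choosing freely a subset of `upperSet \ lowerSet`. Hence the generating function
of ideals factors over each trace. -/
lemma sum_ideals {S : Type*} [CommRing S] (w : α → S) (hd : Disjoint V W)
    (hV : ∀ x ∈ V, ∀ y ∈ V, ¬ R x y) (hW : ∀ x ∈ W, ∀ y ∈ W, ¬ R x y) :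
    ∑ I ∈ (V ∪ W).powerset.filter
        (fun I => ∀ x y, y ∈ I → x ∈ V ∪ W → R x y → x ∈ I), ∏ p ∈ I, w p =
      ∑ J ∈ V.powerset.filter (fun J => lowerSet W R J ⊆ upperSet V W R J),
        (∏ p ∈ J, w p) * (∏ p ∈ lowerSet W R J, w p) *
          ∏ p ∈ upperSet V W R J \ lowerSet W R J, (1 + w p) := by
  have hd' : ∀ x, x ∈ V → x ∈ W → False := fun x h1 h2 => Finset.disjoint_left.mp hd h1 h2
  rw [← Finset.sum_fiberwise_of_maps_to (g := fun I => I ∩ V)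
    (t := V.powerset.filter (fun J => lowerSet W R J ⊆ upperSet V W R J))]
  · refine Finset.sum_congr rfl fun J hJ => ?_
    simp only [Finset.mem_filter, Finset.mem_powerset] at hJ
    obtain ⟨hJV, hLM⟩ := hJ
    have hLW : lowerSet W R J ⊆ W := Finset.filter_subset _ _
    have hMW : upperSet V W R J ⊆ W := Finset.filter_subset _ _
    have hdJ : ∀ K ⊆ W, Disjoint J K := fun K hK =>
      Finset.disjoint_left.mpr fun x h1 h2 => hd' x (hJV h1) (hK h2)
    rw [Finset.prod_one_add, Finset.mul_sum]
    refine Finset.sum_bij' (fun I _ => (I ∩ W) \ lowerSet W R J)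
      (fun T _ => J ∪ (lowerSet W R J ∪ T)) ?_ ?_ ?_ ?_ ?_
    · intro I hI
      simp only [Finset.mem_filter, Finset.mem_powerset] at hI
      obtain ⟨⟨hIs, hI⟩, rfl⟩ := hI
      simp only [Finset.mem_powerset]
      refine Finset.sdiff_subset_sdiff ?_ (Finset.Subset.refl _)
      intro p hp
      simp only [Finset.mem_inter] at hp
      simp only [upperSet, Finset.mem_filter, Finset.mem_inter]
      exact ⟨hp.2, fun q hq hqp => ⟨hI q p hp.1 (Finset.mem_union_left _ hq) hqp, hq⟩⟩
    · intro T hT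
      simp only [Finset.mem_powerset] at hT
      have hTM : T ⊆ upperSet V W R J := hT.trans Finset.sdiff_subset
      have hLT : lowerSet W R J ∪ T ⊆ upperSet V W R J := Finset.union_subset hLM hTM
      simp only [Finset.mem_filter, Finset.mem_powerset]
      refine ⟨⟨Finset.union_subset_union hJV (hLT.trans hMW), ?_⟩, ?_⟩
      · intro x y hy hx hxy
        rcases Finset.mem_union.mp hx with hx | hx
        · rcases Finset.mem_union.mp hy with hy | hy
          · exact absurd hxy (hV x hx y (hJV hy))
          · have := hLT hy
            simp only [upperSet, Finset.mem_filter] at this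
            exact Finset.mem_union_left _ (this.2 x hx hxy)
        · rcases Finset.mem_union.mp hy with hy | hy
          · refine Finset.mem_union_right _ (Finset.mem_union_left _ ?_)
            simp only [lowerSet, Finset.mem_filter]
            exact ⟨hx, y, hy, hxy⟩
          · exact absurd hxy (hW x hx y (hMW (hLT hy)))
      · ext x
        simp only [Finset.mem_inter, Finset.mem_union]
        constructor
        · rintro ⟨h | h, hx⟩
          · exact h
          · exact (hd' x hx (hMW (hLT (Finset.mem_union.mpr h)))).elim
        · intro h
          exact ⟨Or.inl h, hJV h⟩
    · intro I hI
      simp only [Finset.mem_filter, Finset.mem_powerset] at hI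
      obtain ⟨⟨hIs, hI⟩, rfl⟩ := hI
      have hLI : ∀ x ∈ lowerSet W R (I ∩ V), x ∈ I := by
        intro x hx
        simp only [lowerSet, Finset.mem_filter, Finset.mem_inter] at hx
        obtain ⟨hx, q, hq, hxq⟩ := hx
        exact hI x q hq.1 (Finset.mem_union_right _ hx) hxq
      ext x
      simp only [Finset.mem_inter, Finset.mem_union, Finset.mem_sdiff]
      constructor
      · rintro (h | h | h)
        · exact h.1
        · exact hLI x h
        · exact h.1.1
      · intro h
        rcases Finset.mem_union.mp (hIs h) with h' | h'
        · exact Or.inl ⟨h, h'⟩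
        · by_cases hx : x ∈ lowerSet W R (I ∩ V)
          · exact Or.inr (Or.inl hx)
          · exact Or.inr (Or.inr ⟨⟨h, h'⟩, hx⟩)
    · intro T hT
      simp only [Finset.mem_powerset] at hT
      ext x
      simp only [Finset.mem_inter, Finset.mem_union, Finset.mem_sdiff]
      constructor
      · rintro ⟨⟨h | h | h, hx⟩, hx'⟩
        · exact (hd' x (hJV h) hx).elim
        · exact absurd h hx'
        · exact h
      · intro h
        have := Finset.mem_sdiff.mp (hT h)
        exact ⟨⟨Or.inr (Or.inr h), hMW this.1⟩, this.2⟩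
    · intro I hI
      simp only [Finset.mem_filter, Finset.mem_powerset] at hI
      obtain ⟨⟨hIs, hI⟩, hIJ⟩ := hI
      have hIe : I = J ∪ (lowerSet W R J ∪ ((I ∩ W) \ lowerSet W R J)) := by
        have hLI : ∀ x ∈ lowerSet W R J, x ∈ I := by
          intro x hx
          simp only [lowerSet, Finset.mem_filter] at hx
          obtain ⟨hx, q, hq, hxq⟩ := hx
          exact hI x q (Finset.mem_inter.mp (hIJ ▸ hq)).1 (Finset.mem_union_right _ hx) hxq
        rw [Finset.union_sdiff_of_subset fun x hx =>
          Finset.mem_inter.mpr ⟨hLI x hx, hLW hx⟩, ← hIJ, ← Finset.inter_union_distrib_left]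
        exact (Finset.inter_eq_left.mpr hIs).symm
      conv_lhs => rw [hIe]
      rw [Finset.prod_union, Finset.prod_union Finset.disjoint_sdiff, mul_assoc]
      exact hdJ _ (Finset.union_subset hLW (Finset.sdiff_subset.trans Finset.inter_subset_right))
  · intro I hI
    simp only [Finset.mem_filter, Finset.mem_powerset] at hI ⊢
    obtain ⟨hIs, hI⟩ := hI
    refine ⟨Finset.inter_subset_right, ?_⟩
    intro p hp
    simp only [lowerSet, upperSet, Finset.mem_filter, Finset.mem_inter] at hp ⊢
    obtain ⟨hpW, q, hq, hpq⟩ := hp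
    refine ⟨hpW, fun q' hq' h => ⟨hI q' p ?_ (Finset.mem_union_left _ hq') h, hq'⟩⟩
    exact hI p q hq.1 (Finset.mem_union_right _ hpW) hpq

end Layers

/-! ### Coordinates on `Q_k` -/

/-- Coordinates on the lattice containing `Q_k`. In them `Q_k` becomes the set of `(a,b,c)` with
`max 0 (a+b-k) ≤ c < min a b`, and `t` decreases as `c` increases. -/
def vtx (k a b c : ℤ) : ℤ × ℤ × ℤ := (a + b - k, a - b, 2 * a + 2 * b - k - 2 - 4 * c)

lemma vtx_mem {k a b c : ℤ} :
    vtx k a b c ∈ pentagramQ k ↔ 0 ≤ c ∧ a + b ≤ c + k ∧ c < a ∧ c < b := by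
  simp only [vtx, pentagramQ, Set.mem_ofPred_eq]
  rcases abs_cases (a + b - k) with ⟨h1, h1'⟩ | ⟨h1, h1'⟩ <;>
  rcases abs_cases (a - b) with ⟨h2, h2'⟩ | ⟨h2, h2'⟩ <;> rw [h1, h2] <;> constructor <;>
  intro h <;> omega

lemma vtx_inj {k a b c a' b' c' : ℤ} (h : vtx k a b c = vtx k a' b' c') :
    a = a' ∧ b = b' ∧ c = c' := by
  simp only [vtx, Prod.mk.injEq] at h
  omega

lemma exists_vtx {k : ℤ} {p : ℤ × ℤ × ℤ} (hp : p ∈ pentagramQ k) :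
    ∃ a b c : ℤ, p = vtx k a b c := by
  obtain ⟨r, s, t⟩ := p
  simp only [pentagramQ, Set.mem_ofPred_eq] at hp
  refine ⟨(k + r + s) / 2, (k + r - s) / 2, (2 * r + k - 2 - t) / 4, ?_⟩
  simp only [vtx, Prod.mk.injEq]
  rcases abs_cases r with ⟨h1, h1'⟩ | ⟨h1, h1'⟩ <;>
  rcases abs_cases s with ⟨h2, h2'⟩ | ⟨h2, h2'⟩ <;> rw [h1, h2] at hp <;> omega

lemma exists_vtx_nat {n : ℕ} {p : ℤ × ℤ × ℤ} (hp : p ∈ pentagramQ n) :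
    ∃ a b c : ℕ, p = vtx n a b c ∧ c < a ∧ c < b ∧ a + b ≤ c + n := by
  obtain ⟨a, b, c, rfl⟩ := exists_vtx hp
  have h := vtx_mem.mp hp
  lift a to ℕ using by omega
  lift b to ℕ using by omega
  lift c to ℕ using by omega
  exact ⟨a, b, c, rfl, by omega⟩

/-- The elements of `Q_{n+1}` are indexed by cells `(a,b)` of an `n × n` grid (and `c`), the cell
`(a,b)` having the corners `(a,b)`, `(a+1,b)`, `(a,b+1)`, `(a+1,b+1)`. -/
lemma exists_vtx_succ {n : ℕ} {p : ℤ × ℤ × ℤ} (hp : p ∈ pentagramQ (n + 1)) :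
    ∃ a b c : ℕ, p = vtx (n + 1) (a + 1) (b + 1) c ∧ a < n ∧ b < n ∧
      c ≤ a ∧ c ≤ b ∧ a + b + 1 ≤ c + n := by
  obtain ⟨a, b, c, rfl⟩ := exists_vtx hp
  have h := vtx_mem.mp hp
  refine ⟨(a - 1).toNat, (b - 1).toNat, c.toNat, ?_, by omega⟩
  congr 1 <;> omega

lemma covers_lower {n a b c a' b' c' : ℤ} :
    pentagramCovers (vtx (n + 1) (a + 1) (b + 1) c) (vtx n a' b' c') ↔
      (a' = a + 1 ∧ b' = b + 1 ∧ c' = c) ∨ (a' = a ∧ b' = b ∧ c' = c - 1) := by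
  simp only [pentagramCovers, vtx]
  rcases abs_cases (a' + b' - n - (a + 1 + (b + 1) - (n + 1))) with ⟨h1, h1'⟩ | ⟨h1, h1'⟩ <;>
  rcases abs_cases (a' - b' - (a + 1 - (b + 1))) with ⟨h2, h2'⟩ | ⟨h2, h2'⟩ <;>
  rw [h1, h2] <;> omega

lemma covers_upper {n a b c a' b' c' : ℤ} :
    pentagramCovers (vtx n a' b' c') (vtx (n + 1) (a + 1) (b + 1) c) ↔
      (a' = a ∧ b' = b + 1 ∧ c' = c) ∨ (a' = a + 1 ∧ b' = b ∧ c' = c) := by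
  simp only [pentagramCovers, vtx]
  rcases abs_cases (a + 1 + (b + 1) - (n + 1) - (a' + b' - n)) with ⟨h1, h1'⟩ | ⟨h1, h1'⟩ <;>
  rcases abs_cases (a + 1 - (b + 1) - (a' - b')) with ⟨h2, h2'⟩ | ⟨h2, h2'⟩ <;>
  rw [h1, h2] <;> omega

lemma not_covers {k : ℤ} {x y : ℤ × ℤ × ℤ} (hx : x ∈ pentagramQ k) (hy : y ∈ pentagramQ k) :
    ¬ pentagramCovers x y := by
  obtain ⟨a, b, c, rfl⟩ := exists_vtx hx
  obtain ⟨a', b', c', rfl⟩ := exists_vtx hy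
  simp only [pentagramCovers, vtx]
  omega

lemma pentagramQ_disjoint {k : ℤ} {x : ℤ × ℤ × ℤ} (hx : x ∈ pentagramQ k)
    (hy : x ∈ pentagramQ (k + 1)) : False := by
  simp only [pentagramQ, Set.mem_ofPred_eq] at hx hy
  omega

/-- `Q_n` as a finset. -/
def layerV (n : ℕ) : Finset (ℤ × ℤ × ℤ) := (pentagramPFinset n).filter (· ∈ pentagramQ n)

/-- `Q_{n+1}` as a finset. -/
def layerW (n : ℕ) : Finset (ℤ × ℤ × ℤ) := (pentagramPFinset n).filter (· ∈ pentagramQ (n + 1))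

lemma mem_pentagramPFinset {k : ℤ} {p : ℤ × ℤ × ℤ} :
    p ∈ pentagramPFinset k ↔ p ∈ pentagramP k := by
  obtain ⟨r, s, t⟩ := p
  simp only [pentagramPFinset, Finset.mem_filter, Finset.mem_product, Finset.mem_Icc,
    and_iff_right_iff_imp, pentagramP, pentagramQ, Set.mem_union, Set.mem_ofPred_eq]
  intro h
  rcases abs_cases r with ⟨h1, h1'⟩ | ⟨h1, h1'⟩ <;>
  rcases abs_cases s with ⟨h2, h2'⟩ | ⟨h2, h2'⟩ <;> rw [h1, h2] at h <;> omega

lemma mem_layerV {n : ℕ} {p : ℤ × ℤ × ℤ} : p ∈ layerV n ↔ p ∈ pentagramQ n := by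
  simp only [layerV, Finset.mem_filter, mem_pentagramPFinset, pentagramP, Set.mem_union]
  tauto

lemma mem_layerW {n : ℕ} {p : ℤ × ℤ × ℤ} : p ∈ layerW n ↔ p ∈ pentagramQ (n + 1) := by
  simp only [layerW, Finset.mem_filter, mem_pentagramPFinset, pentagramP, Set.mem_union]
  tauto

lemma layer_union (n : ℕ) : layerV n ∪ layerW n = pentagramPFinset n := by
  ext p
  simp only [Finset.mem_union, mem_layerV, mem_layerW, mem_pentagramPFinset, pentagramP,
    Set.mem_union]

lemma isPentagramOrderIdeal_iff {n : ℕ} {I : Finset (ℤ × ℤ × ℤ)}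
    (hI : I ⊆ pentagramPFinset n) :
    IsPentagramOrderIdeal n (↑I : Set (ℤ × ℤ × ℤ)) ↔
      ∀ x y, y ∈ I → x ∈ pentagramPFinset n → pentagramCovers x y → x ∈ I := by
  constructor
  · intro h x y hy hx hxy
    exact h.2 x y hy (Relation.ReflTransGen.single
      ⟨mem_pentagramPFinset.mp hx, mem_pentagramPFinset.mp (hI hy), hxy⟩)
  · intro h
    refine ⟨fun x hx => mem_pentagramPFinset.mp (hI hx), fun x y hy hxy => ?_⟩
    induction hxy using Relation.ReflTransGen.head_induction_on with
    | refl => exact hy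
    | head h1 _ ih => exact h _ _ ih (mem_pentagramPFinset.mpr h1.1) h1.2.2

/-! ### Corner-sum matrices -/

/-- Corner-sum matrices of `n × n` alternating sign matrices: `C a b` is the sum of the entries in
the first `a` rows and `b` columns. The conditions only concern indices up to `n`. -/
structure IsCornerSum (n : ℕ) (C : ℕ → ℕ → ℕ) : Prop where
  zero_left : ∀ b ≤ n, C 0 b = 0
  zero_right : ∀ a ≤ n, C a 0 = 0
  full_left : ∀ b ≤ n, C n b = b
  full_right : ∀ a ≤ n, C a n = a
  mono_left : ∀ a < n, ∀ b ≤ n, C a b ≤ C (a + 1) b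
  step_left : ∀ a < n, ∀ b ≤ n, C (a + 1) b ≤ C a b + 1
  mono_right : ∀ a ≤ n, ∀ b < n, C a b ≤ C a (b + 1)
  step_right : ∀ a ≤ n, ∀ b < n, C a (b + 1) ≤ C a b + 1

lemma IsCornerSum.le_left {n : ℕ} {C : ℕ → ℕ → ℕ} (h : IsCornerSum n C) {a b : ℕ}
    (ha : a ≤ n) (hb : b ≤ n) : C a b ≤ a := by
  induction a with
  | zero => rw [h.zero_left b hb]
  | succ a ih =>
    have := h.step_left a (by omega) b hb
    have := ih (by omega)
    omega

lemma IsCornerSum.le_right {n : ℕ} {C : ℕ → ℕ → ℕ} (h : IsCornerSum n C) {a b : ℕ}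
    (ha : a ≤ n) (hb : b ≤ n) : C a b ≤ b := by
  induction b with
  | zero => rw [h.zero_right a ha]
  | succ b ih =>
    have := h.step_right a ha b (by omega)
    have := ih (by omega)
    omega

lemma IsCornerSum.add_le {n : ℕ} {C : ℕ → ℕ → ℕ} (h : IsCornerSum n C) {a b : ℕ}
    (ha : a ≤ n) (hb : b ≤ n) : a + b ≤ C a b + n := by
  -- descending induction on `b`, starting from `C a n = a`
  induction hb using Nat.decreasingInduction with
  | self => rw [h.full_right a ha]
  | of_succ b hb ih =>
    have := h.step_right a ha b hb
    omega

/-- The corner sums of the 0-1 matrix whose only 1 in row `i` is in column `π i`. -/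
def permCorner (π : ℕ → ℕ) (a b : ℕ) : ℕ := ∑ i ∈ Finset.range a, if π i < b then 1 else 0

lemma permCorner_succ (π : ℕ → ℕ) (a b : ℕ) :
    permCorner π (a + 1) b = permCorner π a b + if π a < b then 1 else 0 :=
  Finset.sum_range_succ _ _

lemma isCornerSum_permCorner {n : ℕ} {π : ℕ → ℕ} (hπ : ∀ i < n, π i < n)
    (hinj : ∀ i < n, ∀ i' < n, π i = π i' → i = i') : IsCornerSum n (permCorner π) := by
  have hstep : ∀ a ≤ n, ∀ b,
      permCorner π a (b + 1) = permCorner π a b +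
        ∑ i ∈ Finset.range a, if π i = b then 1 else 0 := by
    intro a _ b
    rw [permCorner, permCorner, ← Finset.sum_add_distrib]
    refine Finset.sum_congr rfl fun i _ => ?_
    split_ifs <;> omega
  have hle : ∀ a ≤ n, ∀ b, (∑ i ∈ Finset.range a, if π i = b then 1 else 0) ≤ 1 := by
    intro a ha b
    rw [← Finset.card_filter, Finset.card_le_one]
    intro i hi i' hi'
    simp only [Finset.mem_filter, Finset.mem_range] at hi hi'
    exact hinj i (by omega) i' (by omega) (hi.2.trans hi'.2.symm)
  have h0r : ∀ a, permCorner π a 0 = 0 := fun a => by simp [permCorner]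
  have hfr : ∀ a ≤ n, permCorner π a n = a := by
    intro a ha
    rw [permCorner, Finset.sum_congr rfl (g := fun _ => 1)]
    · simp
    · intro i hi
      rw [Finset.mem_range] at hi
      rw [if_pos (hπ i (by omega))]
  have hsr : ∀ a ≤ n, ∀ b, permCorner π a (b + 1) ≤ permCorner π a b + 1 := by
    intro a ha b
    have := hle a ha b
    have := hstep a ha b
    omega
  refine ⟨fun b _ => by simp [permCorner], fun a _ => h0r a, ?_, hfr, ?_, ?_, ?_, ?_⟩
  · -- `C n` goes from `0` to `n` in `n` steps of size at most one
    intro b hb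
    apply le_antisymm
    · induction b with
      | zero => rw [h0r]
      | succ b ih =>
        have := ih (by omega)
        have := hsr n le_rfl b
        omega
    · induction hb using Nat.decreasingInduction with
      | self => rw [hfr n le_rfl]
      | of_succ b hb ih =>
        have := hsr n le_rfl b
        omega
  · intro a _ b _
    rw [permCorner_succ]
    omega
  · intro a _ b _
    rw [permCorner_succ]
    split_ifs <;> omega
  · intro a ha b _
    rw [hstep a ha b]
    omega
  · intro a ha b _
    exact hsr a ha b

/-- The entry of the alternating sign matrix in the cell `(a,b)` is `1`. -/
def CellOne (C : ℕ → ℕ → ℕ) (a b : ℕ) : Prop :=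
  C (a + 1) (b + 1) = C a b + 1 ∧ C a (b + 1) = C a b ∧ C (a + 1) b = C a b

lemma cellOne_permCorner {n : ℕ} {π : ℕ → ℕ}
    (hinj : ∀ i < n, ∀ i' < n, π i = π i' → i = i') {a b : ℕ} (ha : a < n) :
    CellOne (permCorner π) a b ↔ b = π a := by
  simp only [CellOne, permCorner_succ]
  constructor
  · rintro ⟨h1, h2, h3⟩
    split_ifs at h1 h3 <;> omega
  · rintro rfl
    have : permCorner π a (π a + 1) = permCorner π a (π a) := by
      refine Finset.sum_congr rfl fun i hi => ?_
      rw [Finset.mem_range] at hi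
      have : π i ≠ π a := fun h => by
        have := hinj i (by omega) a ha h
        omega
      split_ifs <;> omega
    simp [this]

/-- Each row of an alternating sign matrix contains a `1`; if row `a` has no `1` outside column
`π a`, then the partial row sums `C (a+1) b - C a b` jump exactly once, at `π a`. -/
lemma eq_permCorner {n : ℕ} {π : ℕ → ℕ} {C : ℕ → ℕ → ℕ} (h : IsCornerSum n C)
    (hone : ∀ a < n, ∀ b < n, CellOne C a b → b = π a) :
    ∀ a ≤ n, ∀ b ≤ n, C a b = permCorner π a b := by
  have jump : ∀ a < n, ∀ b < n, C (a + 1) b = C a b → C (a + 1) (b + 1) = C a (b + 1) + 1 →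
      b = π a := by
    intro a ha b hb h1 h2
    have := h.mono_right a ha.le b hb
    have := h.step_right (a + 1) ha b hb
    exact hone a ha b hb ⟨by omega, by omega, by omega⟩
  have low : ∀ a < n, ∀ b ≤ n, b ≤ π a → C (a + 1) b = C a b := by
    intro a ha b
    induction b with
    | zero => intro _ _; rw [h.zero_right _ ha, h.zero_right _ ha.le]
    | succ b ih =>
      intro hb hba
      have h1 := ih (by omega) (by omega)
      have := h.mono_left a ha (b + 1) hb
      have := h.step_left a ha (b + 1) hb
      by_contra hne
      have := jump a ha b (by omega) h1 (by omega)
      omega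
  have high : ∀ a < n, ∀ b ≤ n, π a < b → C (a + 1) b = C a b + 1 := by
    intro a ha b hb
    induction hb using Nat.decreasingInduction with
    | self => intro _; rw [h.full_right _ ha, h.full_right _ ha.le]
    | of_succ b hb ih =>
      intro hba
      have h1 := ih (by omega)
      have := h.mono_left a ha b hb.le
      have := h.step_left a ha b hb.le
      by_contra hne
      have := jump a ha b hb (by omega) h1
      omega
  intro a
  induction a with
  | zero => intro _ b hb; rw [h.zero_left b hb]; simp [permCorner]
  | succ a ih =>
    intro ha b hb
    rw [permCorner_succ, ← ih (by omega) b hb]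
    split_ifs with hba
    · exact high a ha b hb hba
    · rw [low a ha b hb (by omega)]; rfl

/-! ### Corner sums and traces of ideals on `Q_n` -/

/-- The set `J ⊆ Q_n` consists of the points with `c ≥ C a b`. -/
def Represents (n : ℕ) (C : ℕ → ℕ → ℕ) (J : Finset (ℤ × ℤ × ℤ)) : Prop :=
  ∀ a b c : ℕ, c < a → c < b → a + b ≤ c + n → (vtx n a b c ∈ J ↔ C a b ≤ c)

/-- The elements of `Q_{n+1}` contained in every ideal of `P_n` with trace `J` on `Q_n`. -/
abbrev lowerP (n : ℕ) (J : Finset (ℤ × ℤ × ℤ)) : Finset (ℤ × ℤ × ℤ) :=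
  lowerSet (layerW n) pentagramCovers J

/-- The elements of `Q_{n+1}` that an ideal of `P_n` with trace `J` on `Q_n` may contain. -/
abbrev upperP (n : ℕ) (J : Finset (ℤ × ℤ × ℤ)) : Finset (ℤ × ℤ × ℤ) :=
  upperSet (layerV n) (layerW n) pentagramCovers J

lemma mem_lowerP {n : ℕ} {C : ℕ → ℕ → ℕ} {J : Finset (ℤ × ℤ × ℤ)} (hC : IsCornerSum n C)
    (hJ : J ⊆ layerV n) (hrep : Represents n C J) {a b c : ℕ} (ha : a < n) (hb : b < n)
    (hca : c ≤ a) (hcb : c ≤ b) (hc : a + b + 1 ≤ c + n) :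
    vtx (n + 1) (a + 1) (b + 1) c ∈ lowerP n J ↔ C (a + 1) (b + 1) ≤ c ∨ C a b + 1 ≤ c := by
  have hmem : vtx (n + 1) (a + 1) (b + 1) c ∈ layerW n :=
    mem_layerW.mpr (vtx_mem.mpr (by omega))
  simp only [lowerP, lowerSet, Finset.mem_filter, hmem, true_and]
  constructor
  · rintro ⟨q, hq, hcov⟩
    obtain ⟨a', b', c', rfl, h1, h2, h3⟩ := exists_vtx_nat (mem_layerV.mp (hJ hq))
    rw [hrep a' b' c' h1 h2 h3] at hq
    rcases covers_lower.mp hcov with ⟨e1, e2, e3⟩ | ⟨e1, e2, e3⟩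
    · obtain rfl : a' = a + 1 := by omega
      obtain rfl : b' = b + 1 := by omega
      omega
    · obtain rfl : a' = a := by omega
      obtain rfl : b' = b := by omega
      omega
  · rintro (h | h)
    · have := hC.add_le (a := a + 1) (b := b + 1) ha hb
      refine ⟨vtx n (a + 1 : ℕ) (b + 1 : ℕ) c,
        (hrep _ _ _ (by omega) (by omega) (by omega)).mpr h, ?_⟩
      exact covers_lower.mpr (Or.inl ⟨by push_cast; rfl, by push_cast; rfl, rfl⟩)
    · refine ⟨vtx n a b (c - 1 : ℕ),
        (hrep _ _ _ (by omega) (by omega) (by omega)).mpr (by omega), ?_⟩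
      exact covers_lower.mpr (Or.inr ⟨rfl, rfl, by omega⟩)

lemma mem_upperP {n : ℕ} {C : ℕ → ℕ → ℕ} {J : Finset (ℤ × ℤ × ℤ)} (hC : IsCornerSum n C)
    (hrep : Represents n C J) {a b c : ℕ} (ha : a < n) (hb : b < n)
    (hca : c ≤ a) (hcb : c ≤ b) (hc : a + b + 1 ≤ c + n) :
    vtx (n + 1) (a + 1) (b + 1) c ∈ upperP n J ↔ C a (b + 1) ≤ c ∧ C (a + 1) b ≤ c := by
  have hmem : vtx (n + 1) (a + 1) (b + 1) c ∈ layerW n :=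
    mem_layerW.mpr (vtx_mem.mpr (by omega))
  simp only [upperP, upperSet, Finset.mem_filter, hmem, true_and]
  constructor
  · intro h
    constructor
    · by_cases hlt : c < a
      · refine (hrep a (b + 1) c hlt (by omega) (by omega)).mp
          (h _ (mem_layerV.mpr (vtx_mem.mpr (by omega))) ?_)
        exact covers_upper.mpr (Or.inl ⟨rfl, by push_cast; rfl, rfl⟩)
      · have := hC.le_left (a := a) (b := b + 1) ha.le hb
        omega
    · by_cases hlt : c < b
      · refine (hrep (a + 1) b c (by omega) hlt (by omega)).mp
          (h _ (mem_layerV.mpr (vtx_mem.mpr (by omega))) ?_)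
        exact covers_upper.mpr (Or.inr ⟨by push_cast; rfl, rfl, rfl⟩)
      · have := hC.le_right (a := a + 1) (b := b) ha hb.le
        omega
  · rintro ⟨h1, h2⟩ q hq hcov
    obtain ⟨a', b', c', rfl, g1, g2, g3⟩ := exists_vtx_nat (mem_layerV.mp hq)
    rw [hrep a' b' c' g1 g2 g3]
    rcases covers_upper.mp hcov with ⟨e1, e2, e3⟩ | ⟨e1, e2, e3⟩
    · obtain rfl : a' = a := by omega
      obtain rfl : b' = b + 1 := by omega
      omega
    · obtain rfl : a' = a + 1 := by omega
      obtain rfl : b' = b := by omega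
      omega

/-- The free elements of `Q_{n+1}` correspond to the entries `1` of the alternating sign
matrix. -/
lemma mem_free {n : ℕ} {C : ℕ → ℕ → ℕ} {J : Finset (ℤ × ℤ × ℤ)} (hC : IsCornerSum n C)
    (hJ : J ⊆ layerV n) (hrep : Represents n C J) {p : ℤ × ℤ × ℤ} :
    p ∈ upperP n J \ lowerP n J ↔
      ∃ a b : ℕ, a < n ∧ b < n ∧ CellOne C a b ∧ p = vtx (n + 1) (a + 1) (b + 1) (C a b) := by
  rw [Finset.mem_sdiff]
  constructor
  · rintro ⟨h1, h2⟩
    have hp := mem_layerW.mp (Finset.mem_filter.mp h1).1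
    obtain ⟨a, b, c, rfl, ha, hb, hca, hcb, hc⟩ := exists_vtx_succ hp
    rw [mem_upperP hC hrep ha hb hca hcb hc] at h1
    rw [mem_lowerP hC hJ hrep ha hb hca hcb hc] at h2
    have := hC.mono_left a ha b hb.le
    have := hC.mono_right a ha.le b hb
    have := hC.step_left a ha (b + 1) hb
    have hcC : c = C a b := by omega
    exact ⟨a, b, ha, hb, ⟨by omega, by omega, by omega⟩, by rw [hcC]⟩
  · rintro ⟨a, b, ha, hb, ⟨h1, h2, h3⟩, rfl⟩
    have l1 := hC.le_left ha.le hb.le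
    have l2 := hC.le_right ha.le hb.le
    have l3 := hC.add_le (a := a + 1) (b := b + 1) ha hb
    rw [mem_upperP hC hrep ha hb l1 l2 (by omega), mem_lowerP hC hJ hrep ha hb l1 l2 (by omega)]
    omega

lemma lowerP_subset_upperP {n : ℕ} {C : ℕ → ℕ → ℕ} {J : Finset (ℤ × ℤ × ℤ)}
    (hC : IsCornerSum n C) (hJ : J ⊆ layerV n) (hrep : Represents n C J) :
    lowerP n J ⊆ upperP n J := by
  intro p h
  have hp := mem_layerW.mp (Finset.mem_filter.mp h).1
  obtain ⟨a, b, c, rfl, ha, hb, hca, hcb, hc⟩ := exists_vtx_succ hp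
  rw [mem_lowerP hC hJ hrep ha hb hca hcb hc] at h
  rw [mem_upperP hC hrep ha hb hca hcb hc]
  have := hC.mono_left a ha (b + 1) hb
  have := hC.mono_right (a + 1) ha b hb
  have := hC.step_left a ha b hb.le
  have := hC.step_right a ha.le b hb
  omega

/-- The trace `J` on `Q_n` of an ideal comes from a corner-sum matrix. The inclusion `hLM` says that
`J` is such a trace; read across each element of `Q_{n+1}` it yields the step conditions on `C`. -/
lemma exists_represents {n : ℕ} {J : Finset (ℤ × ℤ × ℤ)} (hJ : J ⊆ layerV n)
    (hLM : lowerP n J ⊆ upperP n J) : ∃ C, IsCornerSum n C ∧ Represents n C J := by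
  have key : ∀ (a b c a' b' c' x y z : ℤ), vtx n a b c ∈ J →
      vtx n a' b' c' ∈ pentagramQ n →
      vtx (n + 1) x y z ∈ pentagramQ (n + 1) →
      pentagramCovers (vtx (n + 1) x y z) (vtx n a b c) →
      pentagramCovers (vtx n a' b' c') (vtx (n + 1) x y z) → vtx n a' b' c' ∈ J := by
    intro a b c a' b' c' x y z h1 h2 h3 h4 h5
    have hL : vtx (n + 1) x y z ∈ lowerP n J := by
      simp only [lowerP, lowerSet, Finset.mem_filter, mem_layerW]
      exact ⟨h3, _, h1, h4⟩
    have hM := hLM hL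
    simp only [upperP, upperSet, Finset.mem_filter] at hM
    exact hM.2 _ (mem_layerV.mpr h2) h5
  have hQ : ∀ {a b c : ℤ}, vtx n a b c ∈ J → 0 ≤ c ∧ a + b ≤ c + n ∧ c < a ∧ c < b :=
    fun h => vtx_mem.mp (mem_layerV.mp (hJ h))
  have F1 : ∀ a b c : ℤ, vtx n (a + 1) b c ∈ J → vtx n a b c ∈ pentagramQ n →
      vtx n a b c ∈ J := by
    intro a b c h1 h2
    have g1 := hQ h1
    obtain ⟨b, rfl⟩ : ∃ b', b = b' + 1 := ⟨b - 1, by ring⟩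
    exact key _ _ _ _ _ _ (a + 1) (b + 1) c h1 h2 (vtx_mem.mpr (by omega))
      (covers_lower.mpr (by omega)) (covers_upper.mpr (by omega))
  have F2 : ∀ a b c : ℤ, vtx n a (b + 1) c ∈ J → vtx n a b c ∈ pentagramQ n →
      vtx n a b c ∈ J := by
    intro a b c h1 h2
    have g1 := hQ h1
    obtain ⟨a, rfl⟩ : ∃ a', a = a' + 1 := ⟨a - 1, by ring⟩
    exact key _ _ _ _ _ _ (a + 1) (b + 1) c h1 h2 (vtx_mem.mpr (by omega))
      (covers_lower.mpr (by omega)) (covers_upper.mpr (by omega))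
  have F3 : ∀ a b c : ℤ, vtx n a b c ∈ J → vtx n (a + 1) b (c + 1) ∈ pentagramQ n →
      vtx n (a + 1) b (c + 1) ∈ J := by
    intro a b c h1 h2
    have g1 := hQ h1
    have g2 := vtx_mem.mp h2
    exact key _ _ _ _ _ _ (a + 1) (b + 1) (c + 1) h1 h2 (vtx_mem.mpr (by omega))
      (covers_lower.mpr (by omega)) (covers_upper.mpr (by omega))
  have F4 : ∀ a b c : ℤ, vtx n a b c ∈ J → vtx n a (b + 1) (c + 1) ∈ pentagramQ n →
      vtx n a (b + 1) (c + 1) ∈ J := by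
    intro a b c h1 h2
    have g1 := hQ h1
    have g2 := vtx_mem.mp h2
    exact key _ _ _ _ _ _ (a + 1) (b + 1) (c + 1) h1 h2 (vtx_mem.mpr (by omega))
      (covers_lower.mpr (by omega)) (covers_upper.mpr (by omega))
  -- `e a b c` will mean `c < C a b`
  let e : ℕ → ℕ → ℕ → Prop := fun a b c =>
    c + n < a + b ∨ (c < a ∧ c < b ∧ vtx n a b c ∉ J)
  have E1 : ∀ a < n, ∀ b ≤ n, ∀ c, e a b c → e (a + 1) b c := by
    intro a ha b hb c h
    rcases h with h | ⟨h1, h2, h3⟩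
    · left; omega
    · by_cases hc : c + n < a + 1 + b
      · exact Or.inl hc
      · refine Or.inr ⟨by omega, h2, fun hm => h3 ?_⟩
        push_cast at hm
        exact F1 a b c hm (vtx_mem.mpr (by omega))
  have E2 : ∀ a ≤ n, ∀ b < n, ∀ c, e a b c → e a (b + 1) c := by
    intro a ha b hb c h
    rcases h with h | ⟨h1, h2, h3⟩
    · left; omega
    · by_cases hc : c + n < a + (b + 1)
      · exact Or.inl hc
      · refine Or.inr ⟨by omega, by omega, fun hm => h3 ?_⟩
        push_cast at hm
        exact F2 a b c hm (vtx_mem.mpr (by omega))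
  have E3 : ∀ a < n, ∀ b ≤ n, ∀ c, e (a + 1) b (c + 1) → e a b c := by
    intro a ha b hb c h
    rcases h with h | ⟨h1, h2, h3⟩
    · left; omega
    · by_cases hc : c + n < a + b
      · exact Or.inl hc
      · refine Or.inr ⟨by omega, by omega, fun hm => h3 ?_⟩
        push_cast
        exact F3 a b c hm (vtx_mem.mpr (by omega))
  have E4 : ∀ a ≤ n, ∀ b < n, ∀ c, e a (b + 1) (c + 1) → e a b c := by
    intro a ha b hb c h
    rcases h with h | ⟨h1, h2, h3⟩
    · left; omega
    · by_cases hc : c + n < a + b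
      · exact Or.inl hc
      · refine Or.inr ⟨by omega, by omega, fun hm => h3 ?_⟩
        push_cast
        exact F4 a b c hm (vtx_mem.mpr (by omega))
  have E5 : ∀ a ≤ n, ∀ b ≤ n, ∀ c, e a b (c + 1) → e a b c := by
    intro a ha b hb c h
    rcases a with _ | a
    · rcases h with h | ⟨h, _⟩ <;> omega
    · exact E1 a ha b hb c (E3 a ha b hb c h)
  have E6 : ∀ a ≤ n, ∀ b ≤ n, ¬ e a b (min a b) := by
    intro a ha b hb h
    rcases h with h | ⟨h1, h2, _⟩ <;> omega
  have hC : ∀ a b : ℕ, ∃ m : ℕ, a ≤ n → b ≤ n → ∀ c, e a b c ↔ c < m := by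
    intro a b
    by_cases hab : a ≤ n ∧ b ≤ n
    · have hex : ∃ m, ¬ e a b m := ⟨_, E6 a hab.1 b hab.2⟩
      refine ⟨Nat.find hex, fun ha hb c => ⟨fun hc => ?_, fun hc => ?_⟩⟩
      · by_contra hlt
        have : ∀ d, ¬ e a b (Nat.find hex + d) := by
          intro d
          induction d with
          | zero => exact Nat.find_spec hex
          | succ d ih => exact fun hd => ih (E5 a ha b hb _ hd)
        apply this (c - Nat.find hex)
        rwa [Nat.add_sub_cancel' (by omega)]
      · exact not_not.mp (Nat.find_min hex hc)
    · exact ⟨0, fun ha hb => absurd ⟨ha, hb⟩ hab⟩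
  choose C hC using hC
  have eqC : ∀ a ≤ n, ∀ b ≤ n, ∀ m, (∀ c, e a b c ↔ c < m) → C a b = m := by
    intro a ha b hb m hm
    apply le_antisymm
    · by_contra hlt
      have := (hm m).mp ((hC a b ha hb m).mpr (by omega))
      omega
    · by_contra hlt
      have := (hC a b ha hb (C a b)).mp ((hm _).mpr (by omega))
      omega
  refine ⟨C, ⟨?_, ?_, ?_, ?_, ?_, ?_, ?_, ?_⟩, ?_⟩
  · intro b hb
    refine eqC _ (by omega) _ hb _ fun c => ⟨fun h => ?_, fun h => by omega⟩
    rcases h with h | ⟨h, _⟩ <;> omega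
  · intro a ha
    refine eqC _ ha _ (by omega) _ fun c => ⟨fun h => ?_, fun h => by omega⟩
    rcases h with h | ⟨_, h, _⟩ <;> omega
  · intro b hb
    refine eqC _ le_rfl _ hb _ fun c => ⟨fun h => ?_, fun h => Or.inl (by omega)⟩
    rcases h with h | ⟨_, h, _⟩ <;> omega
  · intro a ha
    refine eqC _ ha _ le_rfl _ fun c => ⟨fun h => ?_, fun h => Or.inl (by omega)⟩
    rcases h with h | ⟨h, _⟩ <;> omega
  · intro a ha b hb
    by_contra hlt
    have := (hC (a + 1) b ha hb (C (a + 1) b)).mp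
      (E1 a ha b hb _ ((hC a b ha.le hb _).mpr (by omega)))
    omega
  · intro a ha b hb
    by_contra hlt
    have := (hC a b ha.le hb (C a b)).mp
      (E3 a ha b hb _ ((hC (a + 1) b ha hb _).mpr (by omega)))
    omega
  · intro a ha b hb
    by_contra hlt
    have := (hC a (b + 1) ha hb (C a (b + 1))).mp
      (E2 a ha b hb _ ((hC a b ha hb.le _).mpr (by omega)))
    omega
  · intro a ha b hb
    by_contra hlt
    have := (hC a b ha hb.le (C a b)).mp
      (E4 a ha b hb _ ((hC a (b + 1) ha hb _).mpr (by omega)))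
    omega
  · intro a b c h1 h2 h3
    have := hC a b (by omega) (by omega) c
    constructor
    · intro hm
      by_contra hlt
      rcases this.mpr (by omega) with h | ⟨_, _, h⟩
      · omega
      · exact h hm
    · intro hle
      by_contra hm
      have := this.mp (Or.inr ⟨h1, h2, hm⟩)
      omega

lemma represents_unique {n : ℕ} {C : ℕ → ℕ → ℕ} {J J' : Finset (ℤ × ℤ × ℤ)}
    (hJ : J ⊆ layerV n) (hJ' : J' ⊆ layerV n) (h : Represents n C J) (h' : Represents n C J') :
    J = J' := by
  ext p
  constructor
  · intro hp
    obtain ⟨a, b, c, rfl, h1, h2, h3⟩ := exists_vtx_nat (mem_layerV.mp (hJ hp))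
    exact (h' a b c h1 h2 h3).mpr ((h a b c h1 h2 h3).mp hp)
  · intro hp
    obtain ⟨a, b, c, rfl, h1, h2, h3⟩ := exists_vtx_nat (mem_layerV.mp (hJ' hp))
    exact (h a b c h1 h2 h3).mpr ((h' a b c h1 h2 h3).mp hp)

/-- The subset of `Q_n` represented by `C`. -/
def aboveSet (n : ℕ) (C : ℕ → ℕ → ℕ) : Finset (ℤ × ℤ × ℤ) :=
  (layerV n).filter (fun p => ∃ a b c : ℕ, p = vtx n a b c ∧ C a b ≤ c)

lemma aboveSet_represents (n : ℕ) (C : ℕ → ℕ → ℕ) : Represents n C (aboveSet n C) := by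
  intro a b c h1 h2 h3
  simp only [aboveSet, Finset.mem_filter, mem_layerV]
  constructor
  · rintro ⟨_, a', b', c', heq, hle⟩
    obtain ⟨e1, e2, e3⟩ := vtx_inj heq
    norm_cast at e1 e2 e3
    rwa [e1, e2, e3]
  · intro h
    exact ⟨vtx_mem.mpr (by omega), a, b, c, rfl, h⟩

/-! ### The specialization -/

/-- Signed monomials `± z^d`. -/
def IsSignedMonomial {σ : Type*} (x : MvPolynomial σ ℤ) : Prop :=
  ∃ (ε : ℤ) (d : σ →₀ ℕ), (ε = 1 ∨ ε = -1) ∧ x = C ε * monomial d 1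

lemma IsSignedMonomial.prod {σ ι : Type*} (s : Finset ι) (f : ι → MvPolynomial σ ℤ)
    (h : ∀ i ∈ s, IsSignedMonomial (f i)) : IsSignedMonomial (∏ i ∈ s, f i) := by
  refine Finset.prod_induction f IsSignedMonomial ?_ ?_ h
  · rintro _ _ ⟨ε, d, hε, rfl⟩ ⟨ε', d', hε', rfl⟩
    refine ⟨ε * ε', d + d', ?_, ?_⟩
    · rcases hε with rfl | rfl <;> rcases hε' with rfl | rfl <;> simp
    · rw [C_mul, mul_mul_mul_comm, monomial_mul, one_mul]
  · exact ⟨1, 0, Or.inl rfl, by simp⟩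

/-- The image of `y_i` under `φ ∘ R_n`. -/
def weight (n : ℕ) (i : ℤ) : MvPolynomial (ZMod (2 * n)) ℤ :=
  if 2 ≤ (i : ZMod (2 * n)).val ∧ (i : ZMod (2 * n)).val ≤ 2 * n - 2 ∧
    2 ∣ (i : ZMod (2 * n)).val then -1 else X (i : ZMod (2 * n))

lemma phi_R_X (n : ℕ) (i : ℤ) : pentagramPhi n (pentagramR n (X i)) = weight n i := by
  simp [pentagramPhi, pentagramR, weight]

lemma isSignedMonomial_weight (n : ℕ) (i : ℤ) : IsSignedMonomial (weight n i) := by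
  rw [weight]
  split_ifs
  · exact ⟨-1, 0, Or.inr rfl, by simp⟩
  · exact ⟨1, Finsupp.single (i : ZMod (2 * n)) 1, Or.inl rfl, by simp [X]⟩

lemma weight_of_not_dvd {n : ℕ} (hn : 3 ≤ n) {m : ℤ} (h : ¬ (n : ℤ) ∣ m) :
    weight n (2 * m) = -1 := by
  have : NeZero (2 * n) := ⟨by omega⟩
  have hval := ZMod.val_intCast (n := 2 * n) (2 * m)
  rw [weight, if_pos]
  push_cast at hval
  rw [Int.mul_emod_mul_of_pos _ _ two_pos] at hval
  push_cast
  have h1 := Int.emod_nonneg m (b := n) (by omega)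
  have h2 := Int.emod_lt_of_pos m (b := n) (by omega)
  have h3 : m % n ≠ 0 := fun h0 => h (Int.dvd_of_emod_eq_zero h0)
  omega

lemma weight_of_dvd {n : ℕ} {m : ℤ} (h : (n : ℤ) ∣ m) :
    weight n (2 * m) = X 0 := by
  have hz : ((2 * m : ℤ) : ZMod (2 * n)) = 0 := by
    rw [ZMod.intCast_zmod_eq_zero_iff_dvd]
    push_cast
    exact mul_dvd_mul_left 2 h
  rw [weight, hz, if_neg]
  simp

/-- The column of the cell in row `a` whose variable specializes to `z_0`, the variable of the cell
`(a,b)` being `y_{2(2a+b+e)}`. -/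
def specialCol (n : ℕ) (e : ℤ) (a : ℕ) : ℕ := ((-(2 * a + e)) % n).toNat

lemma specialCol_lt {n : ℕ} (hn : 3 ≤ n) (e : ℤ) (a : ℕ) : specialCol n e a < n := by
  have h1 := Int.emod_nonneg (-(2 * a + e)) (b := n) (by omega)
  have h2 := Int.emod_lt_of_pos (-(2 * a + e)) (b := n) (by omega)
  simp only [specialCol]
  omega

lemma dvd_specialCol {n : ℕ} (hn : 3 ≤ n) (e : ℤ) (a : ℕ) :
    (n : ℤ) ∣ 2 * a + specialCol n e a + e := by
  have h1 := Int.emod_nonneg (-(2 * a + e)) (b := n) (by omega)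
  have h2 := Int.mul_ediv_add_emod (-(2 * a + e)) n
  refine ⟨-((-(2 * a + e)) / n), ?_⟩
  simp only [specialCol]
  rw [Int.toNat_of_nonneg h1]
  linarith

lemma eq_of_dvd_sub {n x y : ℕ} (hx : x < n) (hy : y < n) (h : (n : ℤ) ∣ x - y) : x = y := by
  have := Int.eq_zero_of_abs_lt_dvd h (by rw [abs_lt]; omega)
  omega

lemma eq_specialCol {n : ℕ} (hn : 3 ≤ n) {e : ℤ} {a b : ℕ} (hb : b < n)
    (h : (n : ℤ) ∣ 2 * a + b + e) : b = specialCol n e a := by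
  refine eq_of_dvd_sub hb (specialCol_lt hn e a) ?_
  obtain ⟨k, hk⟩ := dvd_sub h (dvd_specialCol hn e a)
  exact ⟨k, by linarith⟩

lemma specialCol_inj {n : ℕ} (hn : 3 ≤ n) (hodd : Odd (n : ℤ)) (e : ℤ) :
    ∀ i < n, ∀ i' < n, specialCol n e i = specialCol n e i' → i = i' := by
  intro i hi i' hi' h
  refine eq_of_dvd_sub hi hi' ?_
  have h2 : (n : ℤ) ∣ 2 * (i - i') := by
    obtain ⟨k, hk⟩ := dvd_sub (dvd_specialCol hn e i) (dvd_specialCol hn e i')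
    rw [h] at hk
    exact ⟨k, by linarith⟩
  have hcop : IsCoprime (n : ℤ) 2 := by
    obtain ⟨k, hk⟩ := hodd
    exact ⟨1, -k, by rw [hk]; ring⟩
  exact hcop.dvd_of_dvd_mul_left h2

/-- `φ(R_n(F_{j,n}))` as a sum over the traces on `Q_n` of the ideals of `P_n`. -/
lemma phi_R_F (n : ℕ) (j : ℤ) :
    pentagramPhi n (pentagramR n (pentagramF j n)) =
      ∑ J ∈ (layerV n).powerset.filter (fun J => lowerP n J ⊆ upperP n J),
        (∏ p ∈ J, weight n (3 * p.1 + p.2.1 + j)) *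
          (∏ p ∈ lowerP n J, weight n (3 * p.1 + p.2.1 + j)) *
          ∏ p ∈ upperP n J \ lowerP n J, (1 + weight n (3 * p.1 + p.2.1 + j)) := by
  rw [← sum_ideals (layerV n) (layerW n) pentagramCovers
    (fun p => weight n (3 * p.1 + p.2.1 + j))
    (Finset.disjoint_left.mpr fun x h1 h2 =>
      pentagramQ_disjoint (mem_layerV.mp h1) (mem_layerW.mp h2))
    (fun x hx y hy => not_covers (mem_layerV.mp hx) (mem_layerV.mp hy))
    (fun x hx y hy => not_covers (mem_layerW.mp hx) (mem_layerW.mp hy)), layer_union]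
  simp only [pentagramF, map_sum, map_prod, phi_R_X]
  refine Finset.sum_congr ?_ fun _ _ => rfl
  ext I
  simp only [Finset.mem_filter, Finset.mem_powerset]
  exact and_congr_right fun h => isPentagramOrderIdeal_iff h

theorem stmt12 (n : ℕ) (hn : 3 ≤ n) (hodd : Odd (n : ℤ)) (j : ℤ) (hj : Even j) :
    ∃ (ε : ℤ) (d : ZMod (2 * n) →₀ ℕ), (ε = 1 ∨ ε = -1) ∧
      pentagramPhi n (pentagramR n (pentagramF j n)) =
        C ε * monomial d 1 * (1 + X (0 : ZMod (2 * n))) ^ n := by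
  -- the variable attached to the cell `(a,b)` is `y_{2(2a+b+e)}`
  obtain ⟨e, he⟩ : ∃ e : ℤ, 3 - 3 * n + j = 2 * e := by
    obtain ⟨k, hk⟩ := hodd
    obtain ⟨l, hl⟩ := hj
    exact ⟨l - 3 * k, by omega⟩
  have hidx : ∀ a b c : ℤ, 3 * (vtx (n + 1) (a + 1) (b + 1) c).1 +
      (vtx (n + 1) (a + 1) (b + 1) c).2.1 + j = 2 * (2 * a + b + e) := by
    intro a b c
    simp only [vtx]
    linarith
  set π := specialCol n e with hπ
  have hinj := specialCol_inj hn hodd e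
  have hC0 : IsCornerSum n (permCorner π) :=
    isCornerSum_permCorner (fun i _ => specialCol_lt hn e i) hinj
  set J₀ := aboveSet n (permCorner π) with hJ₀
  have hJ₀V : J₀ ⊆ layerV n := Finset.filter_subset _ _
  have hrep₀ : Represents n (permCorner π) J₀ := aboveSet_represents n _
  rw [phi_R_F, Finset.sum_eq_single J₀]
  · -- the free elements are the cells `(a, π a)`, all of weight `z_0`
    have hfree : upperP n J₀ \ lowerP n J₀ = (Finset.range n).image
        (fun a : ℕ => vtx (n + 1) (a + 1) (π a + 1) (permCorner π a (π a))) := by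
      ext p
      rw [mem_free hC0 hJ₀V hrep₀]
      simp only [Finset.mem_image, Finset.mem_range]
      constructor
      · rintro ⟨a, b, ha, _, hone, rfl⟩
        obtain rfl := (cellOne_permCorner hinj ha).mp hone
        exact ⟨a, ha, rfl⟩
      · rintro ⟨a, ha, rfl⟩
        exact ⟨a, π a, ha, specialCol_lt hn e a, (cellOne_permCorner hinj ha).mpr rfl, rfl⟩
    have hprod : ∏ p ∈ upperP n J₀ \ lowerP n J₀, (1 + weight n (3 * p.1 + p.2.1 + j)) =
        (1 + X (0 : ZMod (2 * n))) ^ n := by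
      rw [hfree, Finset.prod_image, Finset.prod_congr rfl
        (g := fun _ => 1 + X (0 : ZMod (2 * n)))]
      · simp
      · intro a _
        rw [hidx, weight_of_dvd (dvd_specialCol hn e a)]
      · intro a _ a' _ h
        have := (vtx_inj h).1
        omega
    obtain ⟨ε, d, hε, hs⟩ := IsSignedMonomial.prod J₀ (fun p => weight n (3 * p.1 + p.2.1 + j))
      fun p _ => isSignedMonomial_weight n _
    obtain ⟨ε', d', hε', hs'⟩ := IsSignedMonomial.prod (lowerP n J₀)
      (fun p => weight n (3 * p.1 + p.2.1 + j)) fun p _ => isSignedMonomial_weight n _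
    refine ⟨ε * ε', d + d', ?_, ?_⟩
    · rcases hε with rfl | rfl <;> rcases hε' with rfl | rfl <;> simp
    · rw [hprod, hs, hs', C_mul, mul_mul_mul_comm, monomial_mul, one_mul]
  · intro J hJ hne
    simp only [Finset.mem_filter, Finset.mem_powerset] at hJ
    obtain ⟨D, hD, hrep⟩ := exists_represents hJ.1 hJ.2
    -- some free element has weight `-1`, for otherwise `J = J₀`
    obtain ⟨a, b, ha, hb, hone, hab⟩ : ∃ a b : ℕ, a < n ∧ b < n ∧ CellOne D a b ∧ b ≠ π a := by
      by_contra hcon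
      push Not at hcon
      have heq := eq_permCorner hD fun a ha b hb => hcon a b ha hb
      refine hne (represents_unique hJ.1 hJ₀V (C := permCorner π) ?_ hrep₀)
      intro a b c h1 h2 h3
      rw [hrep a b c h1 h2 h3, heq a (by omega) b (by omega)]
    apply mul_eq_zero_of_right
    refine Finset.prod_eq_zero ((mem_free hD hJ.1 hrep).mpr ⟨a, b, ha, hb, hone, rfl⟩) ?_
    rw [hidx, weight_of_not_dvd hn fun hdvd => hab (eq_specialCol hn hb hdvd)]
    ring
  · intro h
    refine (h ?_).elim
    rw [Finset.mem_filter, Finset.mem_powerset]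
    exact ⟨hJ₀V, lowerP_subset_upperP hC0 hJ₀V hrep₀⟩

end
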